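/- arXiv:0705.3925 — 2 statements merged into one kernel-verified Lean document; each statement's English description precedes it below -/
import Mathlib

section
/- The dual Cauchy identity: ∏_{i=1}^m ∏_{j=1}^n (1 + a_i b_j) = Σ_{μ : μ_1 ≤ m} s_{μ'}(a_1,…,a_m) s_μ(b_1,…,b_n), where the sum is over partitions μ with largest part at most m (equivalently, at most n parts and μ_1 ≤ m), and μ' denotes the conjugate partition. -/
open Finset

/-- The complete homogeneous symmetric polynomial `h_k` in `n` variables, evaluated at `x`. -/
def hpoly {R : Type*} [CommRing R] (n k : ℕ) (x : Fin n → R) : R :=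
  ∑ d ∈ Finset.Nat.antidiagonalTuple n k, ∏ i, x i ^ d i

/-- `h_k` extended to integer index: zero for negative `k`. -/
def hpolyZ {R : Type*} [CommRing R] (n : ℕ) (k : ℤ) (x : Fin n → R) : R :=
  if 0 ≤ k then hpoly n k.toNat x else 0

/-- The Schur polynomial `s_μ(x_1,…,x_n)` of a partition `μ` with at most `n` parts,
via the Jacobi–Trudi determinant `det[h_{μ_i - i + j}]_{i,j=1..n}`. -/
def schur {R : Type*} [CommRing R] (n : ℕ) (μ : Fin n → ℕ) (x : Fin n → R) : R :=
  Matrix.det (Matrix.of fun i j : Fin n =>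
    hpolyZ n ((μ i : ℤ) - ((i : ℕ) : ℤ) + ((j : ℕ) : ℤ)) x)

/-- The conjugate (transpose) partition, with `m` slots: `μ'_j = #{i : μ_i > j}`. -/
def conjPartition {n : ℕ} (m : ℕ) (μ : Fin n → ℕ) : Fin m → ℕ :=
  fun j => ((Finset.univ : Finset (Fin n)).filter (fun i => (j : ℕ) < μ i)).card

/-! The projective Vandermonde matrix with nodes `(b_j, 1)` and `(1, -a_i)` has determinant
`V(b) * V(a) * ∏ (1 + a_i b_j)`, where `V` is the Vandermonde determinant. Expand it by Laplace
along the two blocks of rows. A set of `n` columns among `n + m` is the set of vertical steps of the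
boundary lattice path of a partition `μ` in the `n × m` box; the horizontal steps are then governed
by `μ'`. By the bialternant formula the two complementary minors are `V(b) s_μ(b)` and
`(-1)^|μ'| V(a) s_{μ'}(a)`, and the sign of the path permutation is `(-1)^|μ'|` as well. The factor
`V(b) * V(a)` is cancelled for generic variables over `ℤ`, which are then specialized. -/

section Determinants

variable {R : Type*} [CommRing R]

/-- Here `hT` says that the `T i` represent the bijections `α ⊕ β ≃ γ` modulo permutations of `α`
and of `β`, so the sum runs over the possible sets of columns facing the rows `e ∘ Sum.inl`. -/
lemma det_eq_sum_laplace {ι α β γ : Type*} [Fintype ι] [Fintype α] [DecidableEq α] [Fintype β]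
    [DecidableEq β] [Fintype γ] [DecidableEq γ] (M : Matrix γ γ R) (e : α ⊕ β ≃ γ)
    (T : ι → (α ⊕ β ≃ γ))
    (hT : Function.Bijective fun t : ι × Equiv.Perm α × Equiv.Perm β =>
      (Equiv.Perm.sumCongr t.2.1 t.2.2).trans (T t.1)) :
    M.det = ∑ i, ((Equiv.Perm.sign (e.symm.trans (T i)) : ℤ) : R) *
      ((M.submatrix (e ∘ Sum.inl) (T i ∘ Sum.inl)).det *
        (M.submatrix (e ∘ Sum.inr) (T i ∘ Sum.inr)).det) := by
  have sign_trans (σ : Equiv.Perm (α ⊕ β)) (f : α ⊕ β ≃ γ) :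
      Equiv.Perm.sign (e.symm.trans (σ.trans f)) =
        Equiv.Perm.sign σ * Equiv.Perm.sign (e.symm.trans f) :=
    Equiv.Perm.sign_trans_trans _ _ _
  have det_eq_sum_equiv : M.det = ∑ f : α ⊕ β ≃ γ,
      ((Equiv.Perm.sign (e.symm.trans f) : ℤ) : R) * ∏ x, M (e x) (f x) := by
    rw [← Matrix.det_transpose, Matrix.det_apply', ← (e.equivCongr (Equiv.refl γ)).sum_comp]
    refine Finset.sum_congr rfl fun f _ => congrArg₂ _ rfl ?_
    rw [← e.prod_comp]
    simp
  rw [det_eq_sum_equiv, ← hT.sum_comp, Fintype.sum_prod_type]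
  refine Finset.sum_congr rfl fun i _ => ?_
  rw [← Matrix.det_transpose (M.submatrix _ _), Matrix.det_apply',
    ← Matrix.det_transpose (M.submatrix (e ∘ Sum.inr) _), Matrix.det_apply',
    Fintype.sum_mul_sum, Fintype.sum_prod_type, Finset.mul_sum]
  refine Finset.sum_congr rfl fun σ _ => ?_
  rw [Finset.mul_sum]
  refine Finset.sum_congr rfl fun τ _ => ?_
  rw [sign_trans, Equiv.Perm.sign_sumCongr]
  simp only [Fintype.prod_sum_type, Equiv.trans_apply, Equiv.Perm.sumCongr_apply, Sum.map_inl,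
    Sum.map_inr, Matrix.transpose_apply, Matrix.submatrix_apply, Function.comp_apply,
    Units.val_mul, Int.cast_mul]
  ring

lemma prod_prod_Ioi_fin_add {M : Type*} [CommMonoid M] {n m : ℕ}
    (f : Fin (n + m) → Fin (n + m) → M) :
    ∏ i, ∏ j ∈ Finset.Ioi i, f i j =
      (∏ i : Fin n, ∏ j ∈ Finset.Ioi i, f (Fin.castAdd m i) (Fin.castAdd m j)) *
      (∏ i : Fin n, ∏ j : Fin m, f (Fin.castAdd m i) (Fin.natAdd n j)) *
      ∏ i : Fin m, ∏ j ∈ Finset.Ioi i, f (Fin.natAdd n i) (Fin.natAdd n j) := by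
  have Ioi_castAdd (i : Fin n) : Finset.Ioi (Fin.castAdd m i) =
      ((Finset.Ioi i).disjSum Finset.univ).map finSumFinEquiv.toEmbedding := by
    ext j
    refine Fin.addCases (fun j => ?_) (fun j => ?_) j
    · simp [(Fin.strictMono_castAdd m).lt_iff_lt]
    · simp [Fin.lt_def]; omega
  simp_rw [Fin.prod_univ_add, ← Fin.map_natAddEmb_Ioi, Ioi_castAdd, Finset.prod_map,
    Finset.prod_disjSum, Finset.prod_mul_distrib]
  simp

/-- Only pairs with one index in each block can be inverted. -/
lemma sign_eq_prod_of_strictMono_blocks {n m : ℕ} (e : Fin n ⊕ Fin m ≃ Fin (n + m))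
    (hl : StrictMono (e ∘ Sum.inl)) (hr : StrictMono (e ∘ Sum.inr)) :
    Equiv.Perm.sign (finSumFinEquiv.symm.trans e) =
      ∏ i, ∏ j, if e (Sum.inl i) < e (Sum.inr j) then 1 else -1 := by
  rw [Equiv.Perm.sign_eq_prod_prod_Ioi, prod_prod_Ioi_fin_add]
  have left_eq_one (i : Fin n) : ∏ j ∈ Finset.Ioi i,
      (if e (Sum.inl i) < e (Sum.inl j) then 1 else -1 : ℤˣ) = 1 :=
    Finset.prod_eq_one fun j hj => if_pos (hl (Finset.mem_Ioi.1 hj))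
  have right_eq_one (i : Fin m) : ∏ j ∈ Finset.Ioi i,
      (if e (Sum.inr i) < e (Sum.inr j) then 1 else -1 : ℤˣ) = 1 :=
    Finset.prod_eq_one fun j hj => if_pos (hr (Finset.mem_Ioi.1 hj))
  simp [left_eq_one, right_eq_one]

lemma det_projVandermonde_append {n m : ℕ} (a : Fin m → R) (b : Fin n → R) :
    (Matrix.projVandermonde (Fin.append b 1) (Fin.append 1 (-a))).det =
      (Matrix.vandermonde b).det * (Matrix.vandermonde a).det * ∏ i, ∏ j, (1 + a i * b j) := by
  rw [Matrix.det_projVandermonde, prod_prod_Ioi_fin_add, Matrix.det_vandermonde,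
    Matrix.det_vandermonde, mul_right_comm, Finset.prod_comm (s := Finset.univ (α := Fin m))]
  simp [add_comm, sub_eq_add_neg, mul_comm]

end Determinants

section Alternants

variable {R : Type*} [CommRing R] {n : ℕ}

/-- The alternant `det (x_i ^ e_j)` with exponents `e`. -/
def alternant (x : Fin n → R) (e : Fin n → ℕ) : R :=
  (Matrix.of fun i j => x i ^ e j).det

lemma alternant_val (x : Fin n → R) :
    alternant x (fun j => (j : ℕ)) = (Matrix.vandermonde x).det :=
  rfl

lemma alternant_comp_perm (x : Fin n → R) (e : Fin n → ℕ) (σ : Equiv.Perm (Fin n)) :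
    alternant x (e ∘ σ) = Equiv.Perm.sign σ * alternant x e :=
  Matrix.det_permute' σ (Matrix.of fun i j => x i ^ e j)

lemma alternant_neg (x : Fin n → R) (e : Fin n → ℕ) :
    alternant (-x) e = (-1) ^ (∑ j, e j) * alternant x e := by
  rw [← Finset.prod_pow_eq_pow_sum, alternant, alternant, ← Matrix.det_mul_row]
  congr 1
  ext i j
  simp [neg_pow (x i)]

lemma alternant_neg_rev (x : Fin n → R) :
    alternant (-x) (fun j => (j.rev : ℕ)) = (Matrix.vandermonde x).det := by
  have projVandermonde_eq : Matrix.projVandermonde 1 (-x) =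
      Matrix.of fun i j => (-x) i ^ (j.rev : ℕ) := by
    ext i j
    simp [Matrix.projVandermonde_apply]
  rw [alternant, ← projVandermonde_eq, Matrix.det_projVandermonde, Matrix.det_vandermonde]
  simp [sub_eq_add_neg, add_comm]

/-- The generating function `∑ h_k(x) t^k` of the complete homogeneous symmetric polynomials. -/
noncomputable def hseries (x : Fin n → R) : PowerSeries R :=
  PowerSeries.mk fun k => hpoly n k x

lemma hseries_eq_prod (x : Fin n → R) :
    hseries x = ∏ i, PowerSeries.mk (x i ^ ·) := by
  ext k
  rw [PowerSeries.coeff_prod, hseries, PowerSeries.coeff_mk, hpoly]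
  refine Finset.sum_equiv Finsupp.equivFunOnFinite.symm (fun d => ?_) (fun d _ => ?_)
  · simp [Finset.Nat.mem_antidiagonalTuple]
  · simp

lemma hpolyZ_natCast_sub (x : Fin n → R) (c r : ℕ) :
    hpolyZ n ((c : ℤ) - r) x = PowerSeries.coeff c (hseries x * PowerSeries.X ^ r) := by
  rw [PowerSeries.coeff_mul_X_pow', hpolyZ, hseries, PowerSeries.coeff_mk]
  simp only [sub_nonneg, Nat.cast_le, Int.toNat_sub]

lemma mk_pow_mul_one_sub (c : R) :
    PowerSeries.mk (c ^ ·) * (1 - PowerSeries.C c * PowerSeries.X) = 1 := by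
  simpa [PowerSeries.rescale_mk, PowerSeries.rescale_X] using
    congrArg (PowerSeries.rescale c) (PowerSeries.mk_one_mul_one_sub_eq_one R)

lemma hseries_mul_prod_erase (x : Fin n → R) (j : Fin n) :
    hseries x * ∏ i ∈ Finset.univ.erase j, (1 - PowerSeries.C (x i) * PowerSeries.X) =
      PowerSeries.mk (x j ^ ·) := by
  rw [hseries_eq_prod, ← Finset.mul_prod_erase _ _ (Finset.mem_univ j), mul_assoc,
    ← Finset.prod_mul_distrib, Finset.prod_eq_one fun i _ => mk_pow_mul_one_sub (x i), mul_one]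

lemma exists_sum_mul_hpolyZ_eq_pow (x : Fin n → R) (j : Fin n) :
    ∃ g : Fin n → R, ∀ c : ℕ, ∑ r, g r * hpolyZ n ((c : ℤ) - (r : ℕ)) x = x j ^ c := by
  let G : Polynomial R :=
    ∏ i ∈ Finset.univ.erase j, (1 - Polynomial.C (x i) * Polynomial.X)
  have hG : (G : PowerSeries R) =
      ∏ i ∈ Finset.univ.erase j, (1 - PowerSeries.C (x i) * PowerSeries.X) := by
    simp only [G, ← Polynomial.coeToPowerSeries.ringHom_apply, map_prod]
    simp
  have natDegree_lt : G.natDegree < n := by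
    have factor_le (i : Fin n) : (1 - Polynomial.C (x i) * Polynomial.X).natDegree ≤ 1 := by
      compute_degree
    calc G.natDegree ≤ _ := Polynomial.natDegree_prod_le _ _
      _ ≤ _ := Finset.sum_le_card_nsmul _ _ 1 fun i _ => factor_le i
      _ < n := by simpa using j.pos
  refine ⟨fun r => G.coeff r, fun c => ?_⟩
  have hsum : (G : PowerSeries R) =
      ∑ r : Fin n, PowerSeries.C (G.coeff r) * PowerSeries.X ^ (r : ℕ) := by
    conv_lhs => rw [G.as_sum_range_C_mul_X_pow' natDegree_lt, Finset.sum_range]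
    simp only [← Polynomial.coeToPowerSeries.ringHom_apply, map_sum]
    simp
  calc ∑ r : Fin n, G.coeff r * hpolyZ n ((c : ℤ) - (r : ℕ)) x
      = PowerSeries.coeff c (hseries x * (G : PowerSeries R)) := by
        simp only [hpolyZ_natCast_sub, hsum, Finset.mul_sum, map_sum, mul_left_comm (hseries x),
          PowerSeries.coeff_C_mul]
    _ = x j ^ c := by rw [hG, hseries_mul_prod_erase, PowerSeries.coeff_mk]

lemma alternant_eq_vandermonde_mul_det_hpolyZ (x : Fin n → R) (e : Fin n → ℕ) :
    alternant x e = (Matrix.vandermonde x).det *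
      (Matrix.of fun r j : Fin n => hpolyZ n ((e j : ℤ) - (r : ℕ)) x).det := by
  choose g hg using exists_sum_mul_hpolyZ_eq_pow x
  have factor (e : Fin n → ℕ) : alternant x e = (Matrix.of g).det *
      (Matrix.of fun r j : Fin n => hpolyZ n ((e j : ℤ) - (r : ℕ)) x).det := by
    rw [← Matrix.det_mul, alternant]
    congr 1
    ext i j
    simp [Matrix.mul_apply, hg]
  have det_unitriangular :
      (Matrix.of fun r j : Fin n => hpolyZ n (((j : ℕ) : ℤ) - (r : ℕ)) x).det = 1 := by
    rw [Matrix.det_of_isUpperTriangular]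
    · simp [hpolyZ, hpoly, Finset.Nat.antidiagonalTuple_zero_right]
    · intro i j hij
      simp [hpolyZ, (show j < i from hij).not_ge]
  rw [factor e, ← alternant_val, factor, det_unitriangular, mul_one]

lemma alternant_rev_add (x : Fin n → R) (μ : Fin n → ℕ) :
    alternant x (fun j => μ j.rev + j) = (Matrix.vandermonde x).det * schur n μ x := by
  rw [alternant_eq_vandermonde_mul_det_hpolyZ, schur]
  congr 1
  rw [← Matrix.det_transpose, ← Matrix.det_submatrix_equiv_self Fin.revPerm]
  congr 1
  ext i j
  simp only [Matrix.transpose_apply, Matrix.submatrix_apply, Matrix.of_apply, Fin.revPerm_apply,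
    Fin.rev_rev, Fin.val_rev]
  congr 1
  omega

lemma alternant_add_rev (x : Fin n → R) (μ : Fin n → ℕ) :
    alternant x (fun j => μ j + j.rev) = alternant x (fun j => (j.rev : ℕ)) * schur n μ x := by
  have hμ := alternant_comp_perm x (fun j => μ j.rev + j) Fin.revPerm
  have h0 := alternant_comp_perm x (fun j => (j : ℕ)) Fin.revPerm
  simp only [Function.comp_def, Fin.revPerm_apply, Fin.rev_rev] at hμ h0
  rw [hμ, h0, alternant_rev_add, alternant_val, mul_assoc]

lemma alternant_neg_add_rev (x : Fin n → R) (μ : Fin n → ℕ) :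
    alternant (-x) (fun j => μ j + j.rev) =
      (-1) ^ (∑ j, μ j) * ((Matrix.vandermonde x).det * schur n μ x) := by
  rw [← alternant_neg_rev, alternant_neg, alternant_neg, alternant_add_rev, Finset.sum_add_distrib,
    pow_add]
  ring

end Alternants

section BoxPartitions

variable {n m : ℕ}

lemma conjPartition_le (μ : Fin n → ℕ) (j : Fin m) : conjPartition m μ j ≤ n :=
  (Finset.card_filter_le _ _).trans (by simp)

lemma lt_conjPartition_iff {μ : Fin n → ℕ} (hμ : Antitone μ) (i : Fin n) (j : Fin m) :
    (i : ℕ) < conjPartition m μ j ↔ (j : ℕ) < μ i :=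
  Tuple.lt_card_gt_iff_apply_gt_of_antitone hμ

lemma conjPartition_antitone (μ : Fin n → ℕ) : Antitone (conjPartition m μ) := fun _ _ hij =>
  Finset.card_le_card <| Finset.monotone_filter_right _ fun _ _ => (Fin.le_def.1 hij).trans_lt

/-- Partitions with at most `n` parts, each at most `m`, as weakly decreasing tuples padded with
zeros. -/
abbrev BoxPartition (n m : ℕ) : Type :=
  {μ : Fin n → Fin (m + 1) // Antitone μ}

namespace BoxPartition

/-- The parts of a partition in a box, as natural numbers. -/
def parts (μ : BoxPartition n m) (i : Fin n) : ℕ := μ.1 i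

/-- The parts of the conjugate partition, padded with zeros to length `m`. -/
def conj (μ : BoxPartition n m) : Fin m → ℕ := conjPartition m μ.parts

lemma parts_le (μ : BoxPartition n m) (i : Fin n) : μ.parts i ≤ m :=
  Nat.lt_succ_iff.1 (μ.1 i).isLt

lemma parts_antitone (μ : BoxPartition n m) : Antitone μ.parts := fun _ _ hij => μ.2 hij

/-- The positions of the vertical steps in the boundary lattice path of a partition, read from the
bottom left to the top right corner of the box. -/
def verticalStep (μ : BoxPartition n m) (i : Fin n) : Fin (n + m) :=
  ⟨μ.parts i.rev + i, by have := μ.parts_le i.rev; omega⟩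

/-- The positions of the horizontal steps in the boundary lattice path of a partition, in the
same reading order as `verticalStep`. -/
def horizontalStep (μ : BoxPartition n m) (j : Fin m) : Fin (n + m) :=
  ⟨n + j - μ.conj j, by omega⟩

lemma horizontalStep_add_conj (μ : BoxPartition n m) (j : Fin m) :
    (μ.horizontalStep j : ℕ) + μ.conj j = n + j :=
  Nat.sub_add_cancel ((conjPartition_le _ j).trans (Nat.le_add_right n j))

lemma verticalStep_strictMono (μ : BoxPartition n m) : StrictMono μ.verticalStep := fun _ _ h =>
  Fin.lt_def.2 (Nat.add_lt_add_of_le_of_lt (μ.parts_antitone (Fin.rev_le_rev.2 h.le)) h)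

lemma horizontalStep_strictMono (μ : BoxPartition n m) : StrictMono μ.horizontalStep := by
  intro j k hjk
  have hconj : μ.conj k ≤ μ.conj j := conjPartition_antitone _ hjk.le
  have hj := μ.horizontalStep_add_conj j
  have hk := μ.horizontalStep_add_conj k
  rw [Fin.lt_def] at hjk ⊢
  omega

lemma lt_conj_iff (μ : BoxPartition n m) (i : Fin n) (j : Fin m) :
    (i : ℕ) < μ.conj j ↔ (j : ℕ) < μ.parts i :=
  lt_conjPartition_iff μ.parts_antitone i j

lemma verticalStep_lt_horizontalStep_iff (μ : BoxPartition n m) (i : Fin n) (j : Fin m) :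
    μ.verticalStep i < μ.horizontalStep j ↔ μ.parts i.rev ≤ j := by
  have hconj := μ.lt_conj_iff i.rev j
  have hj := μ.horizontalStep_add_conj j
  rw [Fin.val_rev] at hconj
  simp only [Fin.lt_def, verticalStep]
  omega

lemma verticalStep_ne_horizontalStep (μ : BoxPartition n m) (i : Fin n) (j : Fin m) :
    μ.verticalStep i ≠ μ.horizontalStep j := by
  have hconj := μ.lt_conj_iff i.rev j
  have hj := μ.horizontalStep_add_conj j
  rw [Fin.val_rev] at hconj
  simp only [Ne, Fin.ext_iff, verticalStep]
  omega

/-- The bijection sending the two blocks to the vertical and the horizontal steps of the boundary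
lattice path of a partition. -/
noncomputable def boundaryEquiv (μ : BoxPartition n m) : Fin n ⊕ Fin m ≃ Fin (n + m) :=
  Equiv.ofBijective (Sum.elim μ.verticalStep μ.horizontalStep) <|
    (Fintype.bijective_iff_injective_and_card _).2
      ⟨μ.verticalStep_strictMono.injective.sumElim μ.horizontalStep_strictMono.injective
        μ.verticalStep_ne_horizontalStep, by simp⟩

@[simp]
lemma boundaryEquiv_inl (μ : BoxPartition n m) (i : Fin n) :
    μ.boundaryEquiv (Sum.inl i) = μ.verticalStep i :=
  rfl

@[simp]
lemma boundaryEquiv_inr (μ : BoxPartition n m) (j : Fin m) :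
    μ.boundaryEquiv (Sum.inr j) = μ.horizontalStep j :=
  rfl

lemma sign_boundaryEquiv (μ : BoxPartition n m) :
    Equiv.Perm.sign (finSumFinEquiv.symm.trans μ.boundaryEquiv) = (-1) ^ ∑ j, μ.conj j := by
  rw [sign_eq_prod_of_strictMono_blocks μ.boundaryEquiv μ.verticalStep_strictMono
    μ.horizontalStep_strictMono, Finset.prod_comm, ← Finset.prod_pow_eq_pow_sum]
  refine Finset.prod_congr rfl fun j _ => ?_
  simp only [boundaryEquiv_inl, boundaryEquiv_inr, verticalStep_lt_horizontalStep_iff]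
  calc ∏ i : Fin n, (if μ.parts i.rev ≤ j then 1 else -1 : ℤˣ)
      = ∏ i : Fin n, if μ.parts i ≤ j then 1 else -1 :=
        Equiv.prod_comp Fin.revPerm fun i => if μ.parts i ≤ j then (1 : ℤˣ) else -1
    _ = (-1) ^ μ.conj j := by simp [Finset.prod_ite, conj, conjPartition]

lemma verticalStep_injective :
    Function.Injective (verticalStep : BoxPartition n m → Fin n → Fin (n + m)) := by
  intro μ ν h
  ext i
  simpa [verticalStep, parts] using congrFun h i.rev

lemma exists_verticalStep_eq {p : Fin n → Fin (n + m)} (hp : StrictMono p) :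
    ∃ μ : BoxPartition n m, μ.verticalStep = p := by
  have gap_mono : Monotone fun i => (p i : ℤ) - i := by
    refine (monotone_iff_forall_covBy _).2 fun i j hij => ?_
    have hij_val := Nat.covBy_iff_add_one_eq.1 (Fin.covBy_iff.1 hij)
    have hp_lt := Fin.lt_def.1 (hp hij.lt)
    omega
  have gap_nonneg (i : Fin n) : (i : ℕ) ≤ p i := by
    have := gap_mono (Fin.mk_le_of_le_val (Nat.zero_le i) : ⟨0, i.pos⟩ ≤ i)
    dsimp only at this
    omega
  have gap_le (i : Fin n) : (p i : ℕ) ≤ m + i := by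
    have hi := i.isLt
    have := gap_mono (Fin.le_def.2 (Nat.le_sub_one_of_lt hi) : i ≤ ⟨n - 1, by omega⟩)
    dsimp only at this
    omega
  refine ⟨⟨fun i => ⟨p i.rev - i.rev, by have := gap_le i.rev; omega⟩, fun i j hij => ?_⟩, ?_⟩
  · have := gap_mono (Fin.rev_le_rev.2 hij)
    have := gap_nonneg i.rev
    simp only [Fin.mk_le_mk] at *
    omega
  · ext i
    simpa [verticalStep, parts] using Nat.sub_add_cancel (gap_nonneg i)

lemma bijective_sumCongr_trans_boundaryEquiv :
    Function.Bijective fun t : BoxPartition n m × Equiv.Perm (Fin n) × Equiv.Perm (Fin m) =>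
      (Equiv.Perm.sumCongr t.2.1 t.2.2).trans t.1.boundaryEquiv := by
  constructor
  · rintro ⟨μ, σ, τ⟩ ⟨ν, σ', τ'⟩ h
    have steps_eq : μ.verticalStep ∘ σ = ν.verticalStep ∘ σ' :=
      funext fun i => Equiv.congr_fun h (Sum.inl i)
    have range_eq : Set.range μ.verticalStep = Set.range ν.verticalStep := by
      rw [← σ.surjective.range_comp, steps_eq, σ'.surjective.range_comp]
    obtain rfl : μ = ν := verticalStep_injective <|
      (μ.verticalStep_strictMono.range_inj ν.verticalStep_strictMono).1 range_eq
    have blocks_eq : Equiv.Perm.sumCongr σ τ = Equiv.Perm.sumCongr σ' τ' :=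
      Equiv.ext fun x => μ.boundaryEquiv.injective (Equiv.congr_fun h x)
    exact congrArg (Prod.mk μ) (Equiv.Perm.sumCongrHom_injective blocks_eq)
  · intro f
    let s := Tuple.sort (f ∘ Sum.inl)
    have sorted : StrictMono ((f ∘ Sum.inl) ∘ s) :=
      (Tuple.monotone_sort _).strictMono_of_injective
        ((f.injective.comp Sum.inl_injective).comp s.injective)
    obtain ⟨μ, hμ⟩ := exists_verticalStep_eq sorted
    have mapsTo_inl : Set.MapsTo (f.trans μ.boundaryEquiv.symm)
        (Set.range Sum.inl) (Set.range Sum.inl) := by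
      rintro _ ⟨i, rfl⟩
      refine ⟨s.symm i, ?_⟩
      rw [Equiv.trans_apply, Equiv.eq_symm_apply, boundaryEquiv_inl, hμ]
      simp
    obtain ⟨⟨σ, τ⟩, hστ⟩ := Equiv.Perm.mem_sumCongrHom_range_of_perm_mapsTo_inl mapsTo_inl
    refine ⟨(μ, σ, τ), ?_⟩
    change Equiv.Perm.sumCongr σ τ = _ at hστ
    ext x
    simp [hστ]

end BoxPartition

end BoxPartitions

section DualCauchy

variable {R : Type*} [CommRing R] {m n : ℕ}

lemma vandermonde_mul_dual_cauchy (a : Fin m → R) (b : Fin n → R) :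
    (Matrix.vandermonde b).det * (Matrix.vandermonde a).det * ∏ i, ∏ j, (1 + a i * b j) =
      (Matrix.vandermonde b).det * (Matrix.vandermonde a).det *
        ∑ μ : BoxPartition n m, schur m μ.conj a * schur n μ.parts b := by
  let P := Matrix.projVandermonde (Fin.append b 1) (Fin.append 1 (-a))
  have top_minor (μ : BoxPartition n m) :
      (P.submatrix (finSumFinEquiv ∘ Sum.inl) (μ.boundaryEquiv ∘ Sum.inl)).det =
        (Matrix.vandermonde b).det * schur n μ.parts b := by
    rw [← alternant_rev_add, alternant]
    congr 1
    ext i j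
    simp [P, Matrix.projVandermonde_apply, BoxPartition.verticalStep]
  have bottom_minor (μ : BoxPartition n m) :
      (P.submatrix (finSumFinEquiv ∘ Sum.inr) (μ.boundaryEquiv ∘ Sum.inr)).det =
        (-1) ^ (∑ j, μ.conj j) * ((Matrix.vandermonde a).det * schur m μ.conj a) := by
    rw [← alternant_neg_add_rev, alternant]
    congr 1
    ext i j
    have exponent : ((μ.horizontalStep j).rev : ℕ) = μ.conj j + j.rev := by
      have := μ.horizontalStep_add_conj j
      simp only [Fin.val_rev]
      omega
    simp [P, Matrix.projVandermonde_apply, -Fin.val_rev, exponent]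
  rw [← det_projVandermonde_append,
    det_eq_sum_laplace P finSumFinEquiv _ BoxPartition.bijective_sumCongr_trans_boundaryEquiv,
    Finset.mul_sum]
  refine Finset.sum_congr rfl fun μ _ => ?_
  have sign_sq : ((-1) ^ (∑ j, μ.conj j) * (-1) ^ ∑ j, μ.conj j : R) = 1 := by
    rw [← mul_pow]; simp
  rw [top_minor, bottom_minor, μ.sign_boundaryEquiv]
  push_cast
  linear_combination (Matrix.vandermonde b).det * schur n μ.parts b *
    ((Matrix.vandermonde a).det * schur m μ.conj a) * sign_sq

lemma map_schur {S : Type*} [CommRing S] (φ : R →+* S) (μ : Fin n → ℕ) (x : Fin n → R) :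
    φ (schur n μ x) = schur n μ (φ ∘ x) := by
  rw [schur, schur, RingHom.map_det]
  congr 1
  ext i j
  simp [hpolyZ, hpoly, apply_ite φ]

lemma prod_one_add_mul_eq_sum_boxPartition (a : Fin m → R) (b : Fin n → R) :
    ∏ i, ∏ j, (1 + a i * b j) =
      ∑ μ : BoxPartition n m, schur m μ.conj a * schur n μ.parts b := by
  let A (i : Fin m) : MvPolynomial (Fin m ⊕ Fin n) ℤ := MvPolynomial.X (Sum.inl i)
  let B (j : Fin n) : MvPolynomial (Fin m ⊕ Fin n) ℤ := MvPolynomial.X (Sum.inr j)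
  have hA : (Matrix.vandermonde A).det ≠ 0 := Matrix.det_vandermonde_ne_zero_iff.2 <|
    MvPolynomial.X_injective.comp Sum.inl_injective
  have hB : (Matrix.vandermonde B).det ≠ 0 := Matrix.det_vandermonde_ne_zero_iff.2 <|
    MvPolynomial.X_injective.comp Sum.inr_injective
  have generic := mul_left_cancel₀ (mul_ne_zero hB hA) (vandermonde_mul_dual_cauchy A B)
  let φ := MvPolynomial.eval₂Hom (Int.castRingHom R) (Sum.elim a b)
  have hφA (i : Fin m) : φ (A i) = a i := by simp [φ, A]
  have hφB (j : Fin n) : φ (B j) = b j := by simp [φ, B]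
  simpa only [map_prod, map_sum, map_mul, map_add, map_one, map_schur, Function.comp_def, hφA, hφB]
    using congrArg φ generic

theorem dual_cauchy_identity_general (a : Fin m → R) (b : Fin n → R) :
    (∏ i : Fin m, ∏ j : Fin n, (1 + a i * b j)) =
    ∑ μ ∈ (Finset.univ : Finset (Fin n → Fin (m + 1))).filter
        (fun μ => ∀ i j : Fin n, i ≤ j → μ j ≤ μ i),
      schur m (conjPartition m (fun i => (μ i : ℕ))) a * schur n (fun i => (μ i : ℕ)) b := by
  rw [prod_one_add_mul_eq_sum_boxPartition]
  refine (Finset.sum_subtype _ (fun μ => ?_) fun μ : Fin n → Fin (m + 1) =>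
    schur m (conjPartition m fun i => (μ i : ℕ)) a * schur n (fun i => (μ i : ℕ)) b).symm
  simp [Antitone]

end DualCauchy

/-- dual Cauchy identity:
`∏_{i=1}^m ∏_{j=1}^n (1 + a_i b_j) = Σ_{μ ⊆ m×n rectangle} s_{μ'}(a) s_μ(b)`,
the sum being over partitions `μ` with at most `n` parts, each of size at most `m`. -/
theorem dual_cauchy_identity (m n : ℕ) (a : Fin m → ℝ) (b : Fin n → ℝ) :
    (∏ i : Fin m, ∏ j : Fin n, (1 + a i * b j)) =
    ∑ μ ∈ (Finset.univ : Finset (Fin n → Fin (m + 1))).filter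
        (fun μ => ∀ i j : Fin n, i ≤ j → μ j ≤ μ i),
      schur m (conjPartition m (fun i => (μ i : ℕ))) a * schur n (fun i => (μ i : ℕ)) b :=
  dual_cauchy_identity_general a b
end

section
/- Stembridge's Pfaffian expansion: for 2l×2l antisymmetric matrices A and B, Pf(A + B) = Σ_{S ⊆ {1,…,2l}, |S| even} (-1)^{Σ_{j∈S} j - |S|/2} Pf_S(A) · Pf_{S̄}(B), where Pf_S(A) denotes the Pfaffian of the submatrix of A with rows and columns indexed by S, and S̄ is the complement of S. -/
open Finset

/-- The first element of the `i`-th pair in `Fin (2*n)`. -/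
def pairLo {n : ℕ} (i : Fin n) : Fin (2 * n) := ⟨2 * i.1, by have := i.isLt; omega⟩

/-- The second element of the `i`-th pair in `Fin (2*n)`. -/
def pairHi {n : ℕ} (i : Fin n) : Fin (2 * n) := ⟨2 * i.1 + 1, by have := i.isLt; omega⟩

/-- The Pfaffian of a `2n × 2n` matrix, defined as the sum over perfect matchings
(encoded as permutations in canonical form) of the signed product of entries. -/
def pf {n : ℕ} {R : Type*} [CommRing R] (A : Matrix (Fin (2 * n)) (Fin (2 * n)) R) : R :=
  ∑ σ ∈ Finset.univ.filter
      (fun σ : Equiv.Perm (Fin (2 * n)) =>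
        (∀ i : Fin n, σ (pairLo i) < σ (pairHi i)) ∧
        ∀ i j : Fin n, i < j → σ (pairLo i) < σ (pairLo j)),
    (Equiv.Perm.sign σ : ℤ) • ∏ i : Fin n, A (σ (pairLo i)) (σ (pairHi i))

/-- The Pfaffian of the submatrix of `A` with rows and columns indexed by the (even-sized)
subset `S`, taken in increasing order. -/
def pfSub {N : ℕ} {R : Type*} [CommRing R] (A : Matrix (Fin N) (Fin N) R)
    (S : Finset (Fin N)) : R :=
  pf (Matrix.of fun i j : Fin (2 * (S.card / 2)) =>
    A (S.orderEmbOfFin rfl (Fin.castLE (by omega) i))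
      (S.orderEmbOfFin rfl (Fin.castLE (by omega) j)))

/-! In the Grassmann algebra on anticommuting generators `e_j`, `∑ S, Pf_S(A) e_S` is the
exponential of the two-form `ω_A = ∑ i < j, A i j e_i e_j`, so the expansion says
`exp (ω_A + ω_B) = exp ω_A exp ω_B`. Contraction with the least generator `e_m` is an antiderivation
which multiplies `exp ω_A` by the row `∑ j, A m j e_j` (this is the expansion of a Pfaffian along
its first row), so both sides satisfy the same recurrence on the index set. The sign of `e_S e_T`
counts the pairs `t < s` of `S × T`; for `T = Sᶜ` this count is `∑ j ∈ S, j`, with `j` counted from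
`0`, minus the number of pairs inside `S`. -/

section PermCons

variable {n : ℕ}

/-- The permutation of `Fin (n + 1)` whose one-line notation starts with `j` and continues with the
other values in the relative order prescribed by `τ`. -/
def permCons (j : Fin (n + 1)) (τ : Equiv.Perm (Fin n)) : Equiv.Perm (Fin (n + 1)) :=
  j.cycleRange.symm * Equiv.Perm.decomposeFin.symm (0, τ)

theorem permCons_zero (j : Fin (n + 1)) (τ : Equiv.Perm (Fin n)) : permCons j τ 0 = j := by
  simp [permCons]

theorem permCons_succ (j : Fin (n + 1)) (τ : Equiv.Perm (Fin n)) (k : Fin n) :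
    permCons j τ k.succ = j.succAbove (τ k) := by
  simp [permCons]

theorem sign_permCons (j : Fin (n + 1)) (τ : Equiv.Perm (Fin n)) :
    Equiv.Perm.sign (permCons j τ) = (-1) ^ (j : ℕ) * Equiv.Perm.sign τ := by
  simp [permCons]

theorem permCons_bijective :
    Function.Bijective fun p : Fin (n + 1) × Equiv.Perm (Fin n) => permCons p.1 p.2 := by
  refine (Fintype.bijective_iff_injective_and_card _).2
    ⟨?_, (Fintype.card_congr Equiv.Perm.decomposeFin).symm⟩
  rintro ⟨j, τ⟩ ⟨j', τ'⟩ h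
  obtain rfl : j = j' := by simpa only [permCons_zero] using congrArg (· 0) h
  have hτ (k : Fin n) : τ k = τ' k := by
    simpa only [permCons_succ, Fin.succAbove_right_inj] using congrArg (· k.succ) h
  rw [Equiv.ext hτ]

theorem sum_perm_fin_succ {M : Type*} [AddCommMonoid M] (F : Equiv.Perm (Fin (n + 1)) → M) :
    ∑ σ, F σ = ∑ j, ∑ τ, F (permCons j τ) := by
  rw [← Fintype.sum_prod_type']
  exact (permCons_bijective.sum_comp F).symm

end PermCons

section FirstRow

variable {n : ℕ}

/-- The permutations over which `pf` sums, one for each perfect matching of `Fin (2 * n)`. -/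
abbrev IsCanonicalMatching (σ : Equiv.Perm (Fin (2 * n))) : Prop :=
  (∀ i : Fin n, σ (pairLo i) < σ (pairHi i)) ∧
    ∀ i j : Fin n, i < j → σ (pairLo i) < σ (pairLo j)

theorem pairLo_zero : (pairLo (0 : Fin (n + 1)) : Fin (2 * n + 2)) = 0 := rfl

theorem pairHi_zero : (pairHi (0 : Fin (n + 1)) : Fin (2 * n + 2)) = Fin.succ 0 := rfl

theorem pairLo_succ (i : Fin n) :
    (pairLo i.succ : Fin (2 * n + 2)) = (pairLo i).succ.succ := rfl

theorem pairHi_succ (i : Fin n) :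
    (pairHi i.succ : Fin (2 * n + 2)) = (pairHi i).succ.succ := rfl

theorem exists_eq_pairLo_or_eq_pairHi (k : Fin (2 * n)) :
    ∃ i : Fin n, k = pairLo i ∨ k = pairHi i := by
  refine ⟨⟨k / 2, by omega⟩, ?_⟩
  simp only [pairLo, pairHi, Fin.ext_iff]
  omega

theorem IsCanonicalMatching.apply_zero {σ : Equiv.Perm (Fin (2 * (n + 1)))}
    (hσ : IsCanonicalMatching σ) : σ (pairLo 0) = pairLo 0 := by
  have le_lo (i : Fin (n + 1)) : σ (pairLo 0) ≤ σ (pairLo i) := by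
    rcases (Fin.zero_le i).eq_or_lt with rfl | hi
    · exact le_rfl
    · exact (hσ.2 0 i hi).le
  obtain ⟨k, hk⟩ := σ.surjective (pairLo 0)
  have le_zero : σ (pairLo 0) ≤ σ k := by
    obtain ⟨i, rfl | rfl⟩ := exists_eq_pairLo_or_eq_pairHi k
    · exact le_lo i
    · exact (le_lo i).trans (hσ.1 i).le
  exact le_antisymm (hk ▸ le_zero) (Fin.zero_le _)

theorem isCanonicalMatching_permCons_permCons (i : Fin (2 * n + 2)) (j : Fin (2 * n + 1))
    (τ : Equiv.Perm (Fin (2 * n))) :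
    IsCanonicalMatching (n := n + 1) (permCons i (permCons j τ)) ↔
      i = 0 ∧ IsCanonicalMatching τ := by
  have iff_of_zero : IsCanonicalMatching (n := n + 1) (permCons 0 (permCons j τ)) ↔
      IsCanonicalMatching τ := by
    simp only [IsCanonicalMatching, Fin.forall_fin_succ, pairLo_zero, pairHi_zero, pairLo_succ,
      pairHi_succ, permCons_zero, permCons_succ]
    simp [Fin.succAbove_lt_succAbove_iff]
  constructor
  · intro h
    obtain rfl : i = 0 := (permCons_zero i (permCons j τ)).symm.trans h.apply_zero
    exact ⟨rfl, iff_of_zero.1 h⟩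
  · rintro ⟨rfl, h⟩
    exact iff_of_zero.2 h

variable {R : Type*} [CommRing R]

theorem pf_eq_sum_ite (A : Matrix (Fin (2 * n)) (Fin (2 * n)) R) :
    pf A = ∑ σ : Equiv.Perm (Fin (2 * n)), if IsCanonicalMatching σ then
      (Equiv.Perm.sign σ : ℤ) • ∏ i : Fin n, A (σ (pairLo i)) (σ (pairHi i)) else 0 :=
  Finset.sum_filter _ _

theorem pf_succ (A : Matrix (Fin (2 * n + 2)) (Fin (2 * n + 2)) R) :
    pf (n := n + 1) A = ∑ j : Fin (2 * n + 1), (-1) ^ (j : ℕ) * A 0 j.succ *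
      pf (A.submatrix (fun k => (j.succAbove k).succ) fun k => (j.succAbove k).succ) := by
  rw [pf_eq_sum_ite]
  simp only [Nat.mul_succ]
  rw [sum_perm_fin_succ, Fintype.sum_eq_single 0, sum_perm_fin_succ]
  · refine Finset.sum_congr rfl fun j _ => ?_
    rw [pf_eq_sum_ite, Finset.mul_sum]
    refine Finset.sum_congr rfl fun τ _ => ?_
    rw [mul_ite, mul_zero]
    have canonical_iff := isCanonicalMatching_permCons_permCons 0 j τ
    refine if_congr (canonical_iff.trans (and_iff_right rfl)) ?_ rfl
    simp only [Fin.prod_univ_succ, pairLo_zero, pairHi_zero, pairLo_succ, pairHi_succ,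
      permCons_zero, permCons_succ, sign_permCons, Matrix.submatrix_apply, zsmul_eq_mul,
      Fin.zero_succAbove, Fin.val_zero, pow_zero, one_mul]
    push_cast
    ring
  · intro i hi
    rw [sum_perm_fin_succ]
    refine Finset.sum_eq_zero fun j _ => Finset.sum_eq_zero fun τ _ => if_neg fun h => hi ?_
    exact ((isCanonicalMatching_permCons_permCons i j τ).1 h).1

end FirstRow

section PowersetSums

variable {α M : Type*} [DecidableEq α] [AddCommMonoid M]

theorem sum_powerset_sum_mem (X : Finset α) (F : Finset α → α → M) :
    ∑ S ∈ X.powerset, ∑ j ∈ S, F S j =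
      ∑ j ∈ X, ∑ S ∈ (X.erase j).powerset, F (insert j S) j := by
  have swap : ∑ S ∈ X.powerset, ∑ j ∈ S, F S j =
      ∑ j ∈ X, ∑ S ∈ X.powerset with j ∈ S, F S j := by
    refine Finset.sum_comm' fun S j => ?_
    simp only [Finset.mem_powerset, Finset.mem_filter]
    exact ⟨fun h => ⟨h, h.1 h.2⟩, And.left⟩
  rw [swap]
  refine Finset.sum_congr rfl fun j hj => ?_
  refine Finset.sum_nbij' (·.erase j) (insert j) ?_ ?_ ?_ ?_ ?_ <;>
    simp only [Finset.mem_filter, Finset.mem_powerset, Finset.subset_erase]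
  · exact fun S h => ⟨(Finset.erase_subset j S).trans h.1, Finset.notMem_erase j S⟩
  · exact fun S h => ⟨Finset.insert_subset hj h.1, Finset.mem_insert_self j S⟩
  · exact fun S h => Finset.insert_erase h.2
  · exact fun S h => Finset.erase_insert h.2
  · exact fun S h => by rw [Finset.insert_erase h.2]

theorem sum_powerset_sum_mem_sdiff (X : Finset α) (F : Finset α → α → M) :
    ∑ S ∈ X.powerset, ∑ j ∈ X \ S, F S j =
      ∑ j ∈ X, ∑ S ∈ (X.erase j).powerset, F S j := by
  refine Finset.sum_comm' fun S j => ?_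
  simp only [Finset.mem_powerset, Finset.mem_sdiff, Finset.subset_erase]
  tauto

end PowersetSums

section Ranks

variable {α : Type*} [LinearOrder α]

theorem card_filter_lt_add_card_filter_lt_sdiff {S X : Finset α} {j : α} (hS : S ⊆ X.erase j) :
    #{x ∈ S | x < j} + #{x ∈ X.erase j \ S | x < j} = #{x ∈ X | x < j} := by
  rw [← Finset.card_union_of_disjoint (Finset.disjoint_filter_filter Finset.disjoint_sdiff),
    ← Finset.filter_union, Finset.union_sdiff_of_subset hS, Finset.filter_erase,
    Finset.erase_eq_of_notMem (by simp)]

theorem card_filter_lt_add_card_filter_gt {S : Finset α} {j : α} (hj : j ∉ S) :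
    #{x ∈ S | x < j} + #{x ∈ S | j < x} = #S := by
  rw [← Finset.card_filter_add_card_filter_not (s := S) (· < j)]
  congr 2
  refine Finset.filter_congr fun x hx => ?_
  rw [not_lt, le_iff_lt_or_eq, or_iff_left (ne_of_mem_of_not_mem hx hj).symm]

theorem card_filter_lt_orderEmbOfFin {n : ℕ} {S : Finset α} (hS : #S = n)
    (k : Fin n) : #{x ∈ S | x < S.orderEmbOfFin hS k} = k := by
  have filter_eq : {x ∈ S | x < S.orderEmbOfFin hS k} =
      (Finset.Iio k).map (S.orderEmbOfFin hS).toEmbedding := by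
    conv_lhs => enter [2]; rw [← S.map_orderEmbOfFin_univ hS]
    rw [Finset.filter_map, ← Finset.filter_gt_eq_Iio]
    simp
  rw [filter_eq, Finset.card_map, Fin.card_Iio]

theorem sum_eq_sum_orderEmbOfFin {M : Type*} [AddCommMonoid M] {n : ℕ} {S : Finset α}
    (hS : #S = n) (F : α → M) :
    ∑ x ∈ S, F x = ∑ k, F (S.orderEmbOfFin hS k) := by
  conv_lhs => rw [← S.map_orderEmbOfFin_univ hS]
  exact Finset.sum_map _ _ _

end Ranks

section CrossInv

variable {α : Type*} [LinearOrder α]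

/-- The number of pairs `(s, t) ∈ S × T` with `t < s`, which is the number of transpositions that
sort the Grassmann monomial `e_S e_T`. -/
def crossInv (S T : Finset α) : ℕ :=
  ∑ s ∈ S, #{t ∈ T | t < s}

theorem crossInv_insert_left {S : Finset α} (T : Finset α) {a : α} (ha : a ∉ S) :
    crossInv (insert a S) T = #{t ∈ T | t < a} + crossInv S T :=
  Finset.sum_insert ha

theorem crossInv_insert_right (S : Finset α) {T : Finset α} {a : α} (ha : a ∉ T) :
    crossInv S (insert a T) = #{s ∈ S | a < s} + crossInv S T := by
  rw [crossInv, crossInv, Finset.card_filter, ← Finset.sum_add_distrib]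
  refine Finset.sum_congr rfl fun s _ => ?_
  rw [Finset.filter_insert]
  split_ifs with h
  · rw [Finset.card_insert_of_notMem (by simp [ha]), add_comm]
  · rw [zero_add]

theorem crossInv_union_right (S : Finset α) {T U : Finset α} (h : Disjoint T U) :
    crossInv S (T ∪ U) = crossInv S T + crossInv S U := by
  simp only [crossInv, ← Finset.sum_add_distrib, Finset.filter_union]
  exact Finset.sum_congr rfl fun s _ =>
    Finset.card_union_of_disjoint (Finset.disjoint_filter_filter h)

theorem crossInv_self (S : Finset α) : crossInv S S = (#S).choose 2 := by
  induction S using Finset.induction_on_max with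
  | empty => rfl
  | insert a S hlt ih =>
    have ha : a ∉ S := fun h => (hlt a h).false
    rw [crossInv_insert_left _ ha, crossInv_insert_right _ ha, ih, Finset.filter_insert,
      if_neg (lt_irrefl a), Finset.filter_true_of_mem hlt,
      Finset.filter_false_of_mem fun x hx => (hlt x hx).not_gt, Finset.card_empty, zero_add,
      Finset.card_insert_of_notMem ha, Nat.choose_succ_succ', Nat.choose_one_right]

theorem crossInv_univ_right {N : ℕ} (S : Finset (Fin N)) :
    crossInv S Finset.univ = ∑ s ∈ S, (s : ℕ) :=
  Finset.sum_congr rfl fun s _ => by rw [Finset.filter_gt_eq_Iio, Fin.card_Iio]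

theorem crossInv_compl_add_choose {N : ℕ} (S : Finset (Fin N)) :
    crossInv S Sᶜ + (#S).choose 2 = ∑ s ∈ S, (s : ℕ) := by
  rw [← crossInv_self, ← crossInv_union_right S disjoint_compl_left, Finset.union_comm,
    Finset.union_compl,
    crossInv_univ_right]

theorem neg_one_pow_crossInv_compl {N : ℕ} {R : Type*} [Ring R] {S : Finset (Fin N)}
    (hS : Even #S) :
    (-1 : R) ^ crossInv S Sᶜ = (-1) ^ ((∑ j ∈ S, ((j : ℕ) + 1)) - #S / 2) := by
  obtain ⟨p, hp⟩ := hS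
  have choose_add : (#S).choose 2 + p = 2 * (p * p) := by
    rw [hp, ← two_mul, Nat.choose_two_right, mul_assoc, Nat.mul_div_cancel_left _ two_pos]
    rcases p with _ | q
    · rfl
    · rw [show 2 * (q + 1) - 1 = 2 * q + 1 by omega]
      ring
  have exponent_eq : (∑ j ∈ S, ((j : ℕ) + 1)) - #S / 2 = crossInv S Sᶜ + 2 * (p * p) := by
    rw [Finset.sum_add_distrib, ← crossInv_compl_add_choose, Finset.sum_const, smul_eq_mul]
    omega
  rw [exponent_eq, pow_add, (even_two_mul _).neg_one_pow, mul_one]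

end CrossInv

section GrassmannMul

variable {α : Type*} [LinearOrder α] {R : Type*} [CommRing R]

/-- The product of Grassmann algebra elements, an element `∑ S, f S e_S` being encoded by its
coefficient function `f`. -/
def grassmannMul (f g : Finset α → R) (X : Finset α) : R :=
  ∑ S ∈ X.powerset, (-1) ^ crossInv S (X \ S) * f S * g (X \ S)

/-- The product of the vector `∑ j, a j e_j` with the Grassmann algebra element encoded by `f`, in
the same encoding as for `grassmannMul`. -/
def grassmannVecMul (a : α → R) (f : Finset α → R) (X : Finset α) : R :=
  ∑ j ∈ X, (-1) ^ #{x ∈ X | x < j} * a j * f (X.erase j)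

/-- The grade involution `e_S ↦ (-1) ^ #S e_S`, in the same encoding as for `grassmannMul`. -/
def gradeInvol (f : Finset α → R) (S : Finset α) : R :=
  (-1) ^ #S * f S

theorem add_grassmannVecMul (a b : α → R) (f : Finset α → R) (X : Finset α) :
    grassmannVecMul (a + b) f X = grassmannVecMul a f X + grassmannVecMul b f X := by
  simp only [grassmannVecMul, Pi.add_apply, mul_add, add_mul, Finset.sum_add_distrib]

theorem grassmannMul_grassmannVecMul_left (a : α → R) (f g : Finset α → R) (X : Finset α) :
    grassmannMul (grassmannVecMul a f) g X = grassmannVecMul a (grassmannMul f g) X := by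
  simp only [grassmannMul, grassmannVecMul, Finset.mul_sum, Finset.sum_mul]
  rw [sum_powerset_sum_mem]
  refine Finset.sum_congr rfl fun j _ => Finset.sum_congr rfl fun S hS => ?_
  rw [Finset.mem_powerset] at hS
  have hjS : j ∉ S := fun h => Finset.notMem_erase j X (hS h)
  rw [Finset.sdiff_insert, ← Finset.erase_sdiff_comm, Finset.erase_insert hjS,
    crossInv_insert_left _ hjS, Finset.filter_insert, if_neg (lt_irrefl j),
    ← card_filter_lt_add_card_filter_lt_sdiff hS, pow_add, pow_add]
  ring

theorem grassmannMul_gradeInvol_grassmannVecMul (a : α → R) (f g : Finset α → R) (X : Finset α) :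
    grassmannMul (gradeInvol f) (grassmannVecMul a g) X =
      grassmannVecMul a (grassmannMul f g) X := by
  simp only [grassmannMul, grassmannVecMul, Finset.mul_sum]
  rw [sum_powerset_sum_mem_sdiff]
  refine Finset.sum_congr rfl fun j hj => Finset.sum_congr rfl fun S hS => ?_
  rw [Finset.mem_powerset] at hS
  have hjS : j ∉ S := fun h => Finset.notMem_erase j X (hS h)
  have hjX : j ∈ X \ S := Finset.mem_sdiff.2 ⟨hj, hjS⟩
  have filter_eq : {x ∈ X \ S | x < j} = {x ∈ X.erase j \ S | x < j} := by
    rw [Finset.erase_sdiff_comm, Finset.filter_erase, Finset.erase_eq_of_notMem (by simp)]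
  have crossInv_eq : crossInv S (X \ S) = #{x ∈ S | j < x} + crossInv S (X.erase j \ S) := by
    rw [Finset.erase_sdiff_comm, ← crossInv_insert_right S (Finset.notMem_erase j _),
      Finset.insert_erase hjX]
  have sq_sign : (-1 : R) ^ #{x ∈ S | j < x} * (-1) ^ #{x ∈ S | j < x} = 1 := by
    rw [← mul_pow, neg_one_mul, neg_neg, one_pow]
  rw [gradeInvol, crossInv_eq, filter_eq, ← Finset.erase_sdiff_comm,
    ← card_filter_lt_add_card_filter_lt_sdiff hS, ← card_filter_lt_add_card_filter_gt hjS]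
  simp only [pow_add]
  linear_combination (-1 : R) ^ crossInv S (X.erase j \ S) * (-1) ^ #{x ∈ S | x < j} * f S *
    (-1) ^ #{x ∈ X.erase j \ S | x < j} * a j * g (X.erase j \ S) * sq_sign

theorem grassmannMul_insert {m : α} {X : Finset α} (hm : ∀ x ∈ X, m < x)
    (f g : Finset α → R) :
    grassmannMul f g (insert m X) =
      grassmannMul (fun S => f (insert m S)) g X +
        grassmannMul (gradeInvol f) (fun S => g (insert m S)) X := by
  have hmX : m ∉ X := fun h => (hm m h).false
  have hmS {S : Finset α} (hS : S ∈ X.powerset) : m ∉ S :=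
    fun h => hmX (Finset.mem_powerset.1 hS h)
  rw [grassmannMul, Finset.sum_powerset_insert hmX, add_comm]
  congr 1 <;> refine Finset.sum_congr rfl fun S hS => ?_
  · rw [Finset.insert_sdiff_insert, Finset.sdiff_insert_of_notMem hmX,
      crossInv_insert_left _ (hmS hS),
      Finset.filter_false_of_mem fun x hx => (hm x (Finset.sdiff_subset hx)).not_gt,
      Finset.card_empty, zero_add]
  · rw [Finset.insert_sdiff_of_notMem _ (hmS hS),
      crossInv_insert_right _ fun h => hmX (Finset.sdiff_subset h),
      Finset.filter_true_of_mem fun x hx => hm x (Finset.mem_powerset.1 hS hx), gradeInvol, pow_add]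
    ring

theorem grassmannMul_congr {f f' g g' : Finset α → R} {X : Finset α}
    (hf : ∀ S ⊆ X, f S = f' S) (hg : ∀ S ⊆ X, g S = g' S) :
    grassmannMul f g X = grassmannMul f' g' X :=
  Finset.sum_congr rfl fun S hS => by
    rw [hf S (Finset.mem_powerset.1 hS), hg _ Finset.sdiff_subset]

end GrassmannMul

section SubPfaffian

variable {N : ℕ} {R : Type*} [CommRing R]

/-- The Pfaffian of the submatrix of `A` on the rows and columns `S`, with the convention (not
enforced by `pfSub`) that it vanishes for odd `#S`. As a function of `S` this is the exponential of
the two-form of `A`, in the same encoding as for `grassmannMul`. -/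
def pfCoeff (A : Matrix (Fin N) (Fin N) R) (S : Finset (Fin N)) : R :=
  if Even #S then pfSub A S else 0

theorem pfSub_eq_pf_submatrix (A : Matrix (Fin N) (Fin N) R) {n : ℕ} {S : Finset (Fin N)}
    (hS : #S = 2 * n) {f : Fin (2 * n) → Fin N} (hf : StrictMono f) (hfS : ∀ k, f k ∈ S) :
    pfSub A S = pf (A.submatrix f f) := by
  obtain rfl : n = #S / 2 := by omega
  have orderEmb_eq : (fun i => S.orderEmbOfFin rfl (Fin.castLE hS.ge i)) = f :=
    (Finset.orderEmbOfFin_unique hS (fun _ => S.orderEmbOfFin_mem rfl _)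
      ((S.orderEmbOfFin rfl).strictMono.comp (Fin.strictMono_castLE hS.ge))).trans
      (Finset.orderEmbOfFin_unique hS hfS hf).symm
  rw [← orderEmb_eq]
  rfl

theorem pfSub_insert (A : Matrix (Fin N) (Fin N) R) {m : Fin N} {X : Finset (Fin N)}
    (hm : ∀ x ∈ X, m < x) (hX : Odd #X) :
    pfSub A (insert m X) = grassmannVecMul (A m) (pfSub A) X := by
  obtain ⟨n, hn⟩ := hX
  have hmX : m ∉ X := fun h => (hm m h).false
  let e : Fin (2 * n + 1) ↪o Fin N := X.orderEmbOfFin hn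
  have he (k : Fin (2 * n + 1)) : e k ∈ X := X.orderEmbOfFin_mem hn k
  let f : Fin (2 * n + 2) → Fin N := Fin.cons m e
  have f_mem : ∀ k, f k ∈ insert m X :=
    Fin.cases (X.mem_insert_self m) fun k => Finset.mem_insert_of_mem (he k)
  rw [pfSub_eq_pf_submatrix (n := n + 1) A (by rw [Finset.card_insert_of_notMem hmX, hn]; rfl)
    (Fin.strictMono_cons.2 ⟨fun k => hm _ (he k), e.strictMono⟩) f_mem]
  refine (pf_succ (A.submatrix f f)).trans ?_
  rw [grassmannVecMul, sum_eq_sum_orderEmbOfFin hn]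
  refine Finset.sum_congr rfl fun j _ => ?_
  have minor_eq : pfSub A (X.erase (e j)) =
      pf (A.submatrix (fun k => e (j.succAbove k)) fun k => e (j.succAbove k)) :=
    pfSub_eq_pf_submatrix A (by rw [Finset.card_erase_of_mem (he j), hn]; rfl)
      (e.strictMono.comp (Fin.strictMono_succAbove j)) fun k =>
        Finset.mem_erase.2 ⟨e.injective.ne (Fin.succAbove_ne j k), he _⟩
  rw [card_filter_lt_orderEmbOfFin, minor_eq]
  rfl

theorem pfCoeff_of_even (A : Matrix (Fin N) (Fin N) R) {S : Finset (Fin N)} (hS : Even #S) :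
    pfCoeff A S = pfSub A S :=
  if_pos hS

theorem pfCoeff_of_odd (A : Matrix (Fin N) (Fin N) R) {S : Finset (Fin N)} (hS : Odd #S) :
    pfCoeff A S = 0 :=
  if_neg (Nat.not_even_iff_odd.2 hS)

theorem pfCoeff_empty (A : Matrix (Fin N) (Fin N) R) : pfCoeff A ∅ = 1 := by
  rw [pfCoeff_of_even A (by simp), pfSub_eq_pf_submatrix A (n := 0) rfl (f := fun k => k.elim0)
    (fun k => k.elim0) fun k => k.elim0]
  simp [pf]

theorem pfCoeff_insert (A : Matrix (Fin N) (Fin N) R) {m : Fin N} {X : Finset (Fin N)}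
    (hm : ∀ x ∈ X, m < x) :
    pfCoeff A (insert m X) = grassmannVecMul (A m) (pfCoeff A) X := by
  have card_insert : #(insert m X) = #X + 1 :=
    Finset.card_insert_of_notMem fun h => (hm m h).false
  rcases Nat.even_or_odd #X with hX | hX
  · rw [pfCoeff_of_odd A (card_insert ▸ hX.add_one)]
    refine (Finset.sum_eq_zero fun j hj => ?_).symm
    rw [← Finset.card_erase_add_one hj, Nat.even_add_one, Nat.not_even_iff_odd] at hX
    rw [pfCoeff_of_odd A hX, mul_zero]
  · rw [pfCoeff_of_even A (card_insert ▸ hX.add_one), pfSub_insert A hm hX]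
    refine Finset.sum_congr rfl fun j hj => ?_
    rw [← Finset.card_erase_add_one hj, Nat.odd_add_one, Nat.not_odd_iff_even] at hX
    rw [pfCoeff_of_even A hX]

theorem pfCoeff_add (A B : Matrix (Fin N) (Fin N) R) (X : Finset (Fin N)) :
    pfCoeff (A + B) X = grassmannMul (pfCoeff A) (pfCoeff B) X := by
  induction X using Finset.strongInduction with | H X ih => ?_
  rcases X.eq_empty_or_nonempty with rfl | hX
  · simp [grassmannMul, crossInv, pfCoeff_empty]
  obtain ⟨m, Y, hm, rfl⟩ : ∃ m Y, (∀ x ∈ Y, m < x) ∧ X = insert m Y :=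
    ⟨X.min' hX, X.erase (X.min' hX), fun _ => X.min'_lt_of_mem_erase_min' hX,
      (Finset.insert_erase (X.min'_mem hX)).symm⟩
  have ih_erase {j : Fin N} (hj : j ∈ Y) :
      pfCoeff (A + B) (Y.erase j) = grassmannMul (pfCoeff A) (pfCoeff B) (Y.erase j) :=
    ih _ ((Finset.erase_ssubset hj).trans_subset (Finset.subset_insert m Y))
  have row (C : Matrix (Fin N) (Fin N) R) (S : Finset (Fin N)) (hS : S ⊆ Y) :
      grassmannVecMul (C m) (pfCoeff C) S = pfCoeff C (insert m S) :=
    (pfCoeff_insert C fun x hx => hm x (hS hx)).symm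
  calc
    pfCoeff (A + B) (insert m Y) = grassmannVecMul (A m + B m) (pfCoeff (A + B)) Y :=
      pfCoeff_insert (A + B) hm
    _ = grassmannVecMul (A m + B m) (grassmannMul (pfCoeff A) (pfCoeff B)) Y :=
      Finset.sum_congr rfl fun j hj => by rw [ih_erase hj]
    _ = grassmannMul (grassmannVecMul (A m) (pfCoeff A)) (pfCoeff B) Y +
          grassmannMul (gradeInvol (pfCoeff A)) (grassmannVecMul (B m) (pfCoeff B)) Y := by
      rw [add_grassmannVecMul, grassmannMul_grassmannVecMul_left,
        grassmannMul_gradeInvol_grassmannVecMul]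
    _ = grassmannMul (fun S => pfCoeff A (insert m S)) (pfCoeff B) Y +
          grassmannMul (gradeInvol (pfCoeff A)) (fun S => pfCoeff B (insert m S)) Y := by
      rw [grassmannMul_congr (row A) fun _ _ => rfl, grassmannMul_congr (fun _ _ => rfl) (row B)]
    _ = grassmannMul (pfCoeff A) (pfCoeff B) (insert m Y) :=
      (grassmannMul_insert hm _ _).symm

end SubPfaffian

theorem pf_add_expansion_general {R : Type*} [CommRing R] (l : ℕ)
    (A B : Matrix (Fin (2 * l)) (Fin (2 * l)) R) :
    pf (A + B) =
      ∑ S ∈ (Finset.univ : Finset (Finset (Fin (2 * l)))).filter (fun S => Even S.card),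
        (-1 : R) ^ ((∑ j ∈ S, ((j : ℕ) + 1)) - S.card / 2) * pfSub A S * pfSub B Sᶜ := by
  have even_univ : Even #(Finset.univ : Finset (Fin (2 * l))) := by simp
  calc
    pf (A + B) = pfSub (A + B) Finset.univ :=
      (pfSub_eq_pf_submatrix (A + B) (by simp) strictMono_id (by simp)).symm
    _ = pfCoeff (A + B) Finset.univ := (pfCoeff_of_even _ even_univ).symm
    _ = ∑ S, (-1) ^ crossInv S Sᶜ * pfCoeff A S * pfCoeff B Sᶜ := by
      rw [pfCoeff_add, grassmannMul, Finset.powerset_univ]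
      rfl
    _ = _ := by
      rw [Finset.sum_filter]
      refine Finset.sum_congr rfl fun S _ => ?_
      split_ifs with hS
      · have even_compl : Even #Sᶜ := by
          simpa only [Finset.card_compl, Fintype.card_fin] using (even_two_mul l).tsub hS
        rw [neg_one_pow_crossInv_compl hS, pfCoeff_of_even A hS, pfCoeff_of_even B even_compl]
      · rw [pfCoeff_of_odd A (Nat.not_even_iff_odd.1 hS), mul_zero, zero_mul]

/-- Stembridge's Pfaffian expansion: for antisymmetric `2l × 2l` matrices
`A`, `B`, `Pf(A+B) = Σ_{S even} (-1)^{Σ_{j∈S} j - |S|/2} Pf_S(A) Pf_{S̄}(B)`.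
(Indices in `{1,…,2l}`, so the `Fin`-indexed version uses `j+1`.) -/
theorem pf_add_expansion {R : Type*} [CommRing R] (l : ℕ)
    (A B : Matrix (Fin (2 * l)) (Fin (2 * l)) R) (hA : Matrix.transpose A = -A) (hB : Matrix.transpose B = -B) :
    pf (A + B) =
      ∑ S ∈ (Finset.univ : Finset (Finset (Fin (2 * l)))).filter (fun S => Even S.card),
        (-1 : R) ^ ((∑ j ∈ S, ((j : ℕ) + 1)) - S.card / 2) * pfSub A S * pfSub B Sᶜ :=
  pf_add_expansion_general l A B
end
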